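/- The formal language of stratified well-formed formulae of set theory is not context-free. -/

import Mathlib

/-- Alphabet of the usual syntax of set theory. -/
inductive Alph : Type
  | lb | rb | imp | all | deq | mem | w | prime | bot
deriving DecidableEq

/-- Well-formed formulae of set theory; variables are naturals (number of primes). -/
inductive Fm : Type
  | bot : Fm
  | eq : ℕ → ℕ → Fm
  | mem : ℕ → ℕ → Fm
  | imp : Fm → Fm → Fm
  | all : ℕ → Fm → Fm
deriving DecidableEq

/-- The string `w'^n` for the variable with `n` primes. -/
def varStr (n : ℕ) : List Alph := Alph.w :: List.replicate n Alph.prime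

/-- The string of symbols of a formula. -/
def Fm.str : Fm → List Alph
  | .bot => [Alph.bot]
  | .eq x y => varStr x ++ [Alph.deq] ++ varStr y
  | .mem x y => varStr x ++ [Alph.mem] ++ varStr y
  | .imp φ ψ => [Alph.lb] ++ φ.str ++ [Alph.imp] ++ ψ.str ++ [Alph.rb]
  | .all x φ => [Alph.lb, Alph.all] ++ varStr x ++ [Alph.rb] ++ φ.str

/-- Pairs `(x, y)` such that `x ∈ y` occurs as an atomic subformula. -/
def Fm.memPairs : Fm → Finset (ℕ × ℕ)
  | .bot => ∅
  | .eq _ _ => ∅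
  | .mem x y => {(x, y)}
  | .imp φ ψ => φ.memPairs ∪ ψ.memPairs
  | .all _ φ => φ.memPairs

/-- Pairs `(x, y)` such that `x ≐ y` occurs as an atomic subformula. -/
def Fm.eqPairs : Fm → Finset (ℕ × ℕ)
  | .bot => ∅
  | .eq x y => {(x, y)}
  | .mem _ _ => ∅
  | .imp φ ψ => φ.eqPairs ∪ ψ.eqPairs
  | .all _ φ => φ.eqPairs

/-- A formula is stratified if some integer assignment to variables satisfies
`σ x = σ y - 1` for subformulae `x ∈ y` and `σ x = σ y` for subformulae `x ≐ y`. -/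
def Fm.Stratified (φ : Fm) : Prop :=
  ∃ σ : ℕ → ℤ, (∀ p ∈ φ.memPairs, σ p.1 = σ p.2 - 1) ∧ (∀ p ∈ φ.eqPairs, σ p.1 = σ p.2)

/-! ### A marked (Ogden style) pumping lemma -/

section Ogden

variable {T α N : Type}

/-- A list of symbols yields a (decorated) word, with yields of nonterminals given by `P`. -/
def Forest (pr : α → T) (P : N → List α → Prop) : List (Symbol T N) → List α → Prop
  | [], w => w = []
  | .terminal t :: s, w => ∃ a v, w = a :: v ∧ pr a = t ∧ Forest pr P s v
  | .nonterminal A :: s, w => ∃ u v, w = u ++ v ∧ P A u ∧ Forest pr P s v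

theorem Forest.mono {pr : α → T} {P Q : N → List α → Prop} (h : ∀ A w, P A w → Q A w) :
    ∀ s w, Forest pr P s w → Forest pr Q s w
  | [], _, hw => hw
  | .terminal _ :: s, _, ⟨a, v, e, h1, h2⟩ => ⟨a, v, e, h1, Forest.mono h s v h2⟩
  | .nonterminal _ :: s, _, ⟨u, v, e, h1, h2⟩ => ⟨u, v, e, h _ _ h1, Forest.mono h s v h2⟩

theorem Forest.append {pr : α → T} {P : N → List α → Prop} :
    ∀ s t u v, Forest pr P s u → Forest pr P t v → Forest pr P (s ++ t) (u ++ v)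
  | [], t, u, v, hu, hv => by
      have : u = [] := hu
      subst this; exact hv
  | .terminal _ :: s, t, _, v, ⟨a, v', e, h1, h2⟩, hv =>
      ⟨a, v' ++ v, by simp [e], h1, Forest.append s t v' v h2 hv⟩
  | .nonterminal _ :: s, t, _, v, ⟨u', v', e, h1, h2⟩, hv =>
      ⟨u', v' ++ v, by simp [e], h1, Forest.append s t v' v h2 hv⟩

theorem Forest.split {pr : α → T} {P : N → List α → Prop} :
    ∀ s t w, Forest pr P (s ++ t) w → ∃ u v, w = u ++ v ∧ Forest pr P s u ∧ Forest pr P t v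
  | [], t, w, h => ⟨[], w, rfl, rfl, h⟩
  | .terminal _ :: s, t, _, ⟨a, v', e, h1, h2⟩ => by
      obtain ⟨u, v, e2, h3, h4⟩ := Forest.split s t v' h2
      exact ⟨a :: u, v, by simp [e, e2], ⟨a, u, rfl, h1, h3⟩, h4⟩
  | .nonterminal _ :: s, t, _, ⟨u', v', e, h1, h2⟩ => by
      obtain ⟨u, v, e2, h3, h4⟩ := Forest.split s t v' h2
      exact ⟨u' ++ u, v, by simp [e, e2], ⟨u', u, rfl, h1, h3⟩, h4⟩

/-- Pigeonhole: one of the children carries many marks. -/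
theorem Forest.heavy {pr : α → T} {P : N → List α → Prop} (mk : List α → ℕ)
    (mk0 : mk [] = 0) (mk1 : ∀ a, mk [a] ≤ 1) (mka : ∀ u v, mk (u ++ v) = mk u + mk v)
    (B : ℕ) (hB : 1 ≤ B) :
    ∀ s w, Forest pr P s w → s.length * B < mk w → ∃ s1 A s2 u x z,
      s = s1 ++ .nonterminal A :: s2 ∧ w = u ++ x ++ z ∧ P A x ∧ Forest pr P s1 u ∧
      Forest pr P s2 z ∧ B < mk x
  | [], w, h, hm => by
      have : w = [] := h
      subst this; omega
  | .terminal t :: s, w, ⟨a, v, e, h1, h2⟩, hm => by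
      have h3 : mk w = mk [a] + mk v := by rw [e, ← mka]; rfl
      have h4 := mk1 a
      have h5 : s.length * B < mk v := by
        simp only [List.length_cons, Nat.add_mul] at hm; omega
      obtain ⟨s1, A, s2, u, x, z, e1, e2, hP, hu, hz, hx⟩ :=
        Forest.heavy mk mk0 mk1 mka B hB s v h2 h5
      exact ⟨.terminal t :: s1, A, s2, a :: u, x, z, by simp [e1], by simp [e, e2], hP,
        ⟨a, u, rfl, h1, hu⟩, hz, hx⟩
  | .nonterminal A0 :: s, w, ⟨u0, v, e, h1, h2⟩, hm => by
      by_cases hb : B < mk u0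
      · exact ⟨[], A0, s, [], u0, v, rfl, by simp [e], h1, rfl, h2, hb⟩
      have h3 : mk w = mk u0 + mk v := by rw [e, ← mka]
      have h5 : s.length * B < mk v := by
        simp only [List.length_cons, Nat.add_mul] at hm; omega
      obtain ⟨s1, A, s2, u, x, z, e1, e2, hP, hu, hz, hx⟩ :=
        Forest.heavy mk mk0 mk1 mka B hB s v h2 h5
      exact ⟨.nonterminal A0 :: s1, A, s2, u0 ++ u, x, z, by simp [e1], by simp [e, e2], hP,
        ⟨u0, u, rfl, h1, hu⟩, hz, hx⟩

/-- `A` yields `w` by a parse tree of height at most `k`. -/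
def Yld (g : ContextFreeGrammar T) (pr : α → T) : ℕ → g.NT → List α → Prop
  | 0, _, _ => False
  | k + 1, A, w => ∃ r ∈ g.rules, r.input = A ∧ Forest pr (Yld g pr k) r.output w

theorem Yld.succ {g : ContextFreeGrammar T} {pr : α → T} :
    ∀ k A w, Yld g pr k A w → Yld g pr (k + 1) A w
  | 0, _, _, h => h.elim
  | k + 1, _, _, ⟨r, hr, e, h⟩ => ⟨r, hr, e, Forest.mono (Yld.succ k) _ _ h⟩

/-- The sentential form of a decorated word. -/
def tm (g : ContextFreeGrammar T) (pr : α → T) (w : List α) : List (Symbol T g.NT) :=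
  w.map fun a => .terminal (pr a)

theorem tm_append (g : ContextFreeGrammar T) (pr : α → T) (u v : List α) :
    tm g pr (u ++ v) = tm g pr u ++ tm g pr v := by simp [tm]

theorem derives_append {g : ContextFreeGrammar T} {a b c d : List (Symbol T g.NT)}
    (h1 : g.Derives a b) (h2 : g.Derives c d) : g.Derives (a ++ c) (b ++ d) :=
  (h1.append_right c).trans (h2.append_left b)

theorem Forest.derives {g : ContextFreeGrammar T} {pr : α → T} {P : g.NT → List α → Prop}
    (h : ∀ A w, P A w → g.Derives [.nonterminal A] (tm g pr w)) :
    ∀ s w, Forest pr P s w → g.Derives s (tm g pr w)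
  | [], w, hw => by
      have : w = [] := hw
      subst this; exact .refl _
  | .terminal t :: s, w, ⟨a, v, e, h1, h2⟩ => by
      subst e; subst h1
      exact (Forest.derives h s v h2).append_left [_]
  | .nonterminal t :: s, w, ⟨u, v, e, h1, h2⟩ => by
      subst e
      rw [tm_append]
      exact derives_append (h _ _ h1) (Forest.derives h s v h2)

theorem rule_produces {g : ContextFreeGrammar T} {r : ContextFreeRule T g.NT}
    (hr : r ∈ g.rules) : g.Derives [.nonterminal r.input] r.output :=
  ContextFreeGrammar.Produces.single ⟨r, hr, ContextFreeRule.Rewrites.input_output⟩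

theorem Yld.derives {g : ContextFreeGrammar T} {pr : α → T} :
    ∀ k A w, Yld g pr k A w → g.Derives [.nonterminal A] (tm g pr w)
  | 0, _, _, h => h.elim
  | k + 1, _, w, ⟨r, hr, e, h⟩ => by
      subst e
      exact (rule_produces hr).trans (Forest.derives (Yld.derives k) _ _ h)

theorem Forest.of_derives {g : ContextFreeGrammar T} {pr : α → T} {s : List (Symbol T g.NT)}
    {w : List α} (h : g.Derives s (tm g pr w)) : ∃ k, Forest pr (Yld g pr k) s w := by
  induction h using Relation.ReflTransGen.head_induction_on with
  | refl =>
    refine ⟨0, ?_⟩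
    induction w with
    | nil => rfl
    | cons a w ih => exact ⟨a, w, rfl, rfl, ih⟩
  | head h1 _ ih =>
    obtain ⟨k, hk⟩ := ih
    obtain ⟨r, hr, hrw⟩ := h1
    obtain ⟨p, q, e1, e2⟩ := hrw.exists_parts
    subst e1 e2
    obtain ⟨w1, w2, e, h3, h4⟩ := Forest.split _ _ _ hk
    obtain ⟨w3, w4, e', h5, h6⟩ := Forest.split _ _ _ h3
    subst e e'
    refine ⟨k + 1, ?_⟩
    refine Forest.append _ _ _ _ (Forest.append _ _ _ _ (Forest.mono (Yld.succ k) _ _ h5) ?_)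
      (Forest.mono (Yld.succ k) _ _ h4)
    exact ⟨w4, [], by simp, ⟨r, hr, rfl, h6⟩, rfl⟩

/-- A pump inside a decorated word derived from `A`. -/
def HasPump (g : ContextFreeGrammar T) (pr : α → T) (mk cnt : List α → ℕ) (A : g.NT)
    (w : List α) : Prop :=
  ∃ u v x y z A', w = u ++ v ++ x ++ y ++ z ∧ 0 < mk v + mk y ∧ cnt v = 0 ∧ cnt y = 0 ∧
    g.Derives [.nonterminal A] (tm g pr u ++ [.nonterminal A'] ++ tm g pr z) ∧
    g.Derives [.nonterminal A'] (tm g pr v ++ [.nonterminal A'] ++ tm g pr y) ∧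
    g.Derives [.nonterminal A'] (tm g pr x)

theorem derives_wrap {g : ContextFreeGrammar T} {a b c d e f : List (Symbol T g.NT)}
    (h1 : g.Derives a (b ++ c ++ d)) (h2 : g.Derives c (e ++ f)) :
    g.Derives a ((b ++ e) ++ (f ++ d)) := by
  refine h1.trans ?_
  have := (h2.append_left b).append_right d
  simpa using this

theorem derives_wrap3 {g : ContextFreeGrammar T} {a b c d e f k : List (Symbol T g.NT)}
    (h1 : g.Derives a (b ++ c ++ d)) (h2 : g.Derives c (e ++ k ++ f)) :
    g.Derives a ((b ++ e) ++ k ++ (f ++ d)) := by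
  refine h1.trans ?_
  have := (h2.append_left b).append_right d
  simpa using this

open Classical in
theorem ogden_aux (g : ContextFreeGrammar T) (pr : α → T) (mk cnt : List α → ℕ)
    (mk0 : mk [] = 0) (mk1 : ∀ a, mk [a] ≤ 1) (mka : ∀ u v, mk (u ++ v) = mk u + mk v)
    (cnta : ∀ u v, cnt (u ++ v) = cnt u + cnt v)
    (d : ℕ) (hd1 : 1 ≤ d) (hd : ∀ r ∈ g.rules, r.output.length ≤ d) (C : ℕ) :
    ∀ n, ∀ S : Finset (g.NT × ℕ),
      (((g.rules.image fun r => r.input) ×ˢ Finset.range (C + 1)) \ S).card ≤ n →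
      ∀ k A w, Yld g pr k A w → cnt w ≤ C → d ^ n < mk w →
      HasPump g pr mk cnt A w ∨
      ∃ u x z A', w = u ++ x ++ z ∧ (A', cnt x) ∈ S ∧
        g.Derives [.nonterminal A] (tm g pr u ++ [.nonterminal A'] ++ tm g pr z) ∧
        g.Derives [.nonterminal A'] (tm g pr x) := by
  intro n
  induction n with
  | zero =>
    intro S hS k A w hY hc hm
    right
    refine ⟨[], w, [], A, by simp, ?_, by simp [tm]; exact .refl _, hY.derives⟩
    by_contra hne
    cases k with
    | zero => exact hY
    | succ k =>
      obtain ⟨r, hr, e, h⟩ := hY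
      have : (A, cnt w) ∈ ((g.rules.image fun r => r.input) ×ˢ Finset.range (C + 1)) \ S := by
        simp only [Finset.mem_sdiff, Finset.mem_product, Finset.mem_image, Finset.mem_range]
        exact ⟨⟨⟨r, hr, e⟩, by omega⟩, hne⟩
      have := Finset.card_pos.2 ⟨_, this⟩
      omega
  | succ n ihn =>
    intro S hS k
    induction k with
    | zero => intro A w hY; exact hY.elim
    | succ k ihk =>
      intro A w hY hc hm
      have hYd := hY.derives
      by_cases hne : (A, cnt w) ∈ S
      · right
        exact ⟨[], w, [], A, by simp, hne, by simp [tm]; exact .refl _, hYd⟩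
      obtain ⟨r, hr, e, h⟩ := hY
      have hB : 1 ≤ d ^ n := Nat.one_le_pow _ _ hd1
      have hlen : r.output.length * d ^ n < mk w := by
        refine lt_of_le_of_lt ?_ hm
        rw [pow_succ, mul_comm]
        exact Nat.mul_le_mul_left _ (hd r hr)
      obtain ⟨s1, A1, s2, u, x, z, e1, e2, hP, hu, hz, hx⟩ :=
        Forest.heavy mk mk0 mk1 mka _ hB _ _ h hlen
      have hctx : g.Derives [.nonterminal A] (tm g pr u ++ [.nonterminal A1] ++ tm g pr z) := by
        subst e
        refine (rule_produces hr).trans ?_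
        rw [e1]
        have := derives_append (derives_append (Forest.derives (Yld.derives k) _ _ hu)
          (.refl [.nonterminal A1])) (Forest.derives (Yld.derives k) _ _ hz)
        simpa using this
      have hcx : cnt w = cnt u + cnt x + cnt z := by rw [e2, cnta, cnta]
      have hmx : mk w = mk u + mk x + mk z := by rw [e2, mka, mka]
      have lift : HasPump g pr mk cnt A1 x → HasPump g pr mk cnt A w := by
        rintro ⟨u', v', x', y', z', A', e3, h1, h2, h3, h4, h5, h6⟩
        refine ⟨u ++ u', v', x', y', z' ++ z, A', by simp [e2, e3], h1, h2, h3, ?_, h5, h6⟩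
        rw [tm_append, tm_append]
        exact derives_wrap3 hctx h4
      by_cases hbr : mk x = mk w
      · rcases ihk A1 x hP (by omega) (by omega) with hp | ⟨u', x', z', A', e3, h1, h2, h3⟩
        · exact .inl (lift hp)
        · right
          refine ⟨u ++ u', x', z' ++ z, A', by simp [e2, e3], h1, ?_, h3⟩
          rw [tm_append, tm_append]
          exact derives_wrap3 hctx h2
      · have hcard : (((g.rules.image fun r => r.input) ×ˢ Finset.range (C + 1)) \
            insert (A, cnt w) S).card ≤ n := by
          have hmem : (A, cnt w) ∈
              ((g.rules.image fun r => r.input) ×ˢ Finset.range (C + 1)) \ S := by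
            simp only [Finset.mem_sdiff, Finset.mem_product, Finset.mem_image, Finset.mem_range]
            exact ⟨⟨⟨r, hr, e⟩, by omega⟩, hne⟩
          rw [Finset.sdiff_insert, Finset.card_erase_of_mem hmem]
          omega
        rcases ihn (insert (A, cnt w) S) hcard k A1 x hP (by omega) hx with
          hp | ⟨u', x', z', A', e3, h1, h2, h3⟩
        · exact .inl (lift hp)
        have hD : g.Derives [.nonterminal A]
            (tm g pr (u ++ u') ++ [.nonterminal A'] ++ tm g pr (z' ++ z)) := by
          rw [tm_append, tm_append]
          exact derives_wrap3 hctx h2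
        rcases Finset.mem_insert.1 h1 with h1 | h1
        · left
          obtain ⟨rfl, hcc⟩ := Prod.mk.inj h1
          have h7 : cnt x = cnt u' + cnt x' + cnt z' := by rw [e3, cnta, cnta]
          have nil0 : cnt [] = 0 := by
            have := cnta [] []
            simp at this; exact this
          refine ⟨[], u ++ u', x', z' ++ z, [], A', by simp [e2, e3], ?_, ?_, ?_, ?_, hD, h3⟩
          · rw [mka, mka]; omega
          · rw [cnta]; omega
          · rw [cnta]; omega
          · simp [tm]; exact .refl _
        · right
          exact ⟨u ++ u', x', z' ++ z, A', by simp [e2, e3], h1, hD, h3⟩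

/-- Repetition of a word. -/
def rep (v : List α) : ℕ → List α
  | 0 => []
  | i + 1 => v ++ rep v i

theorem rep_comm (v : List α) : ∀ i, rep v i ++ v = v ++ rep v i
  | 0 => by simp [rep]
  | i + 1 => by simp [rep, rep_comm v i]

theorem pump_derives {g : ContextFreeGrammar T} {pr : α → T} {A : g.NT} {v y : List α}
    (h : g.Derives [.nonterminal A] (tm g pr v ++ [.nonterminal A] ++ tm g pr y)) :
    ∀ i, g.Derives [.nonterminal A] (tm g pr (rep v i) ++ [.nonterminal A] ++ tm g pr (rep y i))
  | 0 => by simp [rep, tm]; exact .refl _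
  | i + 1 => by
      have := derives_wrap3 h (pump_derives h i)
      rw [← tm_append, ← tm_append, rep_comm y] at this
      exact this

/-- Ogden-type lemma for the marking `mk`, where the pumped parts avoid the symbols counted by
`cnt` (of which the word has at most `C`). -/
theorem ogden (g : ContextFreeGrammar T) (pr : α → T) (mk cnt : List α → ℕ)
    (mk0 : mk [] = 0) (mk1 : ∀ a, mk [a] ≤ 1) (mka : ∀ u v, mk (u ++ v) = mk u + mk v)
    (cnta : ∀ u v, cnt (u ++ v) = cnt u + cnt v) (C : ℕ) :
    ∃ B, ∀ w : List α, w.map pr ∈ g.language → cnt w ≤ C → B < mk w →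
      ∃ u v x y z, w = u ++ v ++ x ++ y ++ z ∧ 0 < mk v + mk y ∧ cnt v = 0 ∧ cnt y = 0 ∧
        ∀ i, (u ++ rep v i ++ x ++ rep y i ++ z).map pr ∈ g.language := by
  classical
  refine ⟨(g.rules.sup (fun r => r.output.length) + 1) ^
    ((g.rules.image fun r => r.input) ×ˢ Finset.range (C + 1)).card, fun w hw hc hm => ?_⟩
  have tmm : ∀ w : List α, (w.map pr).map Symbol.terminal = tm g pr w := by
    intro w; simp [tm]
  have hd : g.Derives [.nonterminal g.initial] (tm g pr w) := by
    rw [← tmm]; exact hw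
  obtain ⟨k, hk⟩ := Forest.of_derives hd
  obtain ⟨w', w'', e, hY, hnil⟩ := hk
  have : w'' = [] := hnil
  subst this
  rw [List.append_nil] at e
  subst e
  rcases ogden_aux g pr mk cnt mk0 mk1 mka cnta
    (g.rules.sup (fun r => r.output.length) + 1) (by omega)
    (fun r hr => (Finset.le_sup (f := fun r => r.output.length) hr).trans (by omega)) C _ ∅
    (by simp) k _ _ hY hc hm with
    ⟨u, v, x, y, z, A', e, h1, h2, h3, h4, h5, h6⟩ | ⟨_, _, _, _, _, h, _⟩
  · refine ⟨u, v, x, y, z, e, h1, h2, h3, fun i => ?_⟩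
    rw [ContextFreeGrammar.mem_language_iff, tmm]
    have h7 := (derives_wrap3 h4 (pump_derives h5 i)).trans
      ((h6.append_left _).append_right _)
    simpa [tm] using h7
  · simp at h

end Ogden

/-! ### Runs of primes -/

/-- Weighted number of primes that come after exactly `j` other symbols. -/
def occ (wt : Bool → ℕ) : List (Alph × Bool) → ℕ → ℕ
  | [], _ => 0
  | (a, b) :: s, j =>
    if a = Alph.prime then occ wt s j + (if j = 0 then wt b else 0)
    else if j = 0 then 0 else occ wt s (j - 1)

/-- Number of symbols other than primes. -/
def np : List (Alph × Bool) → ℕ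
  | [] => 0
  | (a, _) :: s => np s + if a = Alph.prime then 0 else 1

/-- Total weight of marks. -/
def mks : List (Alph × Bool) → ℕ
  | [] => 0
  | (_, b) :: s => mks s + b.toNat

theorem np_append (u v : List (Alph × Bool)) : np (u ++ v) = np u + np v := by
  induction u with
  | nil => simp [np]
  | cons a u ih => simp only [List.cons_append, np, ih]; omega

theorem mks_append (u v : List (Alph × Bool)) : mks (u ++ v) = mks u + mks v := by
  induction u with
  | nil => simp [mks]
  | cons a u ih => simp only [List.cons_append, mks, ih]; omega

theorem occ_append (wt : Bool → ℕ) (u v : List (Alph × Bool)) (j : ℕ) :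
    occ wt (u ++ v) j = occ wt u j + if np u ≤ j then occ wt v (j - np u) else 0 := by
  induction u generalizing j with
  | nil => simp [np, occ]
  | cons a u ih =>
    obtain ⟨a, b⟩ := a
    simp only [List.cons_append, np, occ, ih]
    by_cases ha : a = Alph.prime
    · simp [ha]; omega
    · by_cases hj : j = 0
      · simp [ha, hj]
      · have e : np u ≤ j - 1 ↔ np u + 1 ≤ j := by omega
        have e2 : j - 1 - np u = j - (np u + 1) := by omega
        simp [ha, hj, e, e2]

theorem np_rep {v : List (Alph × Bool)} (h : np v = 0) : ∀ i, np (rep v i) = 0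
  | 0 => rfl
  | i + 1 => by simp [rep, np_append, h, np_rep h i]

theorem occ_rep (wt : Bool → ℕ) {v : List (Alph × Bool)} (h : np v = 0) (j : ℕ) :
    ∀ i, occ wt (rep v i) j = i * occ wt v j
  | 0 => by simp [rep, occ]
  | i + 1 => by simp [rep, occ_append, h, occ_rep wt h j i]; ring

theorem occ_of_np (wt : Bool → ℕ) {v : List (Alph × Bool)} (h : np v = 0) {j : ℕ} (hj : j ≠ 0) :
    occ wt v j = 0 := by
  induction v with
  | nil => rfl
  | cons a v ih =>
    obtain ⟨a, b⟩ := a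
    by_cases ha : a = Alph.prime
    · simp [np, ha] at h
      simp [occ, ha, ih h, hj]
    · simp [np, ha] at h

theorem mks_le_occ {v : List (Alph × Bool)} (h : np v = 0) : mks v = occ Bool.toNat v 0 := by
  induction v with
  | nil => rfl
  | cons a v ih =>
    obtain ⟨a, b⟩ := a
    by_cases ha : a = Alph.prime
    · simp [np, ha] at h
      simp [occ, mks, ha, ih h]
    · simp [np, ha] at h

theorem occ_le {v : List (Alph × Bool)} (j : ℕ) : occ Bool.toNat v j ≤ occ (fun _ => 1) v j := by
  induction v generalizing j with
  | nil => simp [occ]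
  | cons a v ih =>
    obtain ⟨a, b⟩ := a
    have h1 := ih j
    have h2 := ih (j - 1)
    have := Bool.toNat_le b
    simp only [occ]
    split_ifs <;> omega

/-- The symbols other than primes. -/
def skel (s : List (Alph × Bool)) : List Alph :=
  (s.map Prod.fst).filter (fun a => a ≠ Alph.prime)

theorem skel_append (u v : List (Alph × Bool)) : skel (u ++ v) = skel u ++ skel v := by
  simp [skel]

theorem skel_of_np {v : List (Alph × Bool)} (h : np v = 0) : skel v = [] := by
  induction v with
  | nil => rfl
  | cons a v ih =>
    obtain ⟨a, b⟩ := a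
    by_cases ha : a = Alph.prime
    · simp [np, ha] at h
      have := ih h
      simp only [skel] at this ⊢
      simp [ha]
      simpa using this
    · simp [np, ha] at h

theorem word_ext : ∀ s t : List (Alph × Bool), skel s = skel t →
    (∀ j, occ (fun _ => 1) s j = occ (fun _ => 1) t j) → s.map Prod.fst = t.map Prod.fst
  | [], [], _, _ => rfl
  | [], (a, b) :: t, h, ho => by
      by_cases ha : a = Alph.prime
      · have := ho 0
        simp [occ, ha] at this
      · simp [skel, ha] at h
  | (a, b) :: s, [], h, ho => by
      by_cases ha : a = Alph.prime
      · have := ho 0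
        simp [occ, ha] at this
      · simp [skel, ha] at h
  | (a, b) :: s, (a', b') :: t, h, ho => by
      by_cases ha : a = Alph.prime
      · by_cases ha' : a' = Alph.prime
        · have := word_ext s t (by simpa [skel, ha, ha'] using h) (fun j => by
            have := ho j
            simpa [occ, ha, ha'] using this)
          simp [ha, ha', this]
        · have := ho 0
          simp [occ, ha, ha'] at this
      · by_cases ha' : a' = Alph.prime
        · have := ho 0
          simp [occ, ha, ha'] at this
        · have h' : a = a' ∧ skel s = skel t := by simpa [skel, ha, ha'] using h
          have := word_ext s t h'.2 (fun j => by
            have := ho (j + 1)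
            simpa [occ, ha, ha'] using this)
          simp [h'.1, this]

/-! ### Unique readability -/

/-- The word does not start with a prime. -/
def NoPrime (s : List Alph) : Prop := ∀ t, s ≠ Alph.prime :: t

theorem primes_inj : ∀ (n m : ℕ) (s t : List Alph), NoPrime s → NoPrime t →
    List.replicate n Alph.prime ++ s = List.replicate m Alph.prime ++ t → n = m ∧ s = t
  | 0, 0, _, _, _, _, h => ⟨rfl, by simpa using h⟩
  | 0, m + 1, s, t, hs, _, h => (hs _ (by simpa [List.replicate_succ] using h)).elim
  | n + 1, 0, s, t, _, ht, h => (ht _ (by simpa [List.replicate_succ] using h.symm)).elim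
  | n + 1, m + 1, s, t, hs, ht, h => by
      have := primes_inj n m s t hs ht (by simpa [List.replicate_succ] using h)
      exact ⟨by omega, this.2⟩

theorem str_ne_all (φ : Fm) (s t : List Alph) : φ.str ++ s ≠ Alph.all :: t := by
  cases φ <;> simp [Fm.str, varStr]

theorem noPrime_cons {a : Alph} (h : a ≠ Alph.prime) (s : List Alph) : NoPrime (a :: s) := by
  intro t e
  exact h (List.cons.inj e).1

theorem str_inj : ∀ (φ ψ : Fm) (s t : List Alph), NoPrime s → NoPrime t →
    φ.str ++ s = ψ.str ++ t → φ = ψ ∧ s = t := by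
  intro φ
  induction φ with
  | bot =>
    intro ψ s t hs ht h
    cases ψ <;> simp [Fm.str, varStr] at h ⊢
    exact h
  | eq x y =>
    intro ψ s t hs ht h
    cases ψ <;> simp [Fm.str, varStr] at h ⊢
    · obtain ⟨h1, h2⟩ := primes_inj _ _ _ _ (noPrime_cons (by decide) _)
        (noPrime_cons (by decide) _) h
      simp at h2
      obtain ⟨h3, h4⟩ := primes_inj _ _ _ _ hs ht h2
      exact ⟨⟨h1, h3⟩, h4⟩
    · obtain ⟨h1, h2⟩ := primes_inj _ _ _ _ (noPrime_cons (by decide) _)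
        (noPrime_cons (by decide) _) h
      simp at h2
  | mem x y =>
    intro ψ s t hs ht h
    cases ψ <;> simp [Fm.str, varStr] at h ⊢
    · obtain ⟨h1, h2⟩ := primes_inj _ _ _ _ (noPrime_cons (by decide) _)
        (noPrime_cons (by decide) _) h
      simp at h2
    · obtain ⟨h1, h2⟩ := primes_inj _ _ _ _ (noPrime_cons (by decide) _)
        (noPrime_cons (by decide) _) h
      simp at h2
      obtain ⟨h3, h4⟩ := primes_inj _ _ _ _ hs ht h2
      exact ⟨⟨h1, h3⟩, h4⟩
  | imp φ1 φ2 ih1 ih2 =>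
    intro ψ s t hs ht h
    cases ψ with
    | imp ψ1 ψ2 =>
      simp [Fm.str] at h ⊢
      obtain ⟨h1, h2⟩ := ih1 _ _ _ (noPrime_cons (by decide) _) (noPrime_cons (by decide) _) h
      simp at h2
      obtain ⟨h3, h4⟩ := ih2 _ _ _ (noPrime_cons (by decide) _) (noPrime_cons (by decide) _) h2
      simp at h4
      exact ⟨⟨h1, h3⟩, h4⟩
    | all x ψ =>
      simp [Fm.str] at h
      exact (str_ne_all _ _ _ h).elim
    | _ => simp [Fm.str, varStr] at h
  | all x φ ih =>
    intro ψ s t hs ht h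
    cases ψ with
    | imp ψ1 ψ2 =>
      simp [Fm.str] at h
      exact (str_ne_all _ _ _ h.symm).elim
    | all x ψ =>
      simp [Fm.str, varStr] at h ⊢
      obtain ⟨h1, h2⟩ := primes_inj _ _ _ _ (noPrime_cons (by decide) _)
        (noPrime_cons (by decide) _) h
      simp at h2
      obtain ⟨h3, h4⟩ := ih _ _ _ hs ht h2
      exact ⟨⟨h1, h3⟩, h4⟩
    | _ => simp [Fm.str, varStr] at h

theorem str_injective {φ ψ : Fm} (h : φ.str = ψ.str) : φ = ψ :=
  (str_inj φ ψ [] [] (by intro t; simp) (by intro t; simp) (by simpa using h)).1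

/-! ### The test formulae -/

/-- `[w ∈ a → [w ≐ c → w ∈ b]]`. -/
def tf (a c b : ℕ) : Fm := .imp (.mem 0 a) (.imp (.eq 0 c) (.mem 0 b))

/-- The string of `tf a c b` with the primes of `c` marked. -/
def mtf (a c b : ℕ) : List (Alph × Bool) :=
  [(.lb, false), (.w, false), (.mem, false), (.w, false)] ++ List.replicate a (.prime, false) ++
  [(.imp, false), (.lb, false), (.w, false), (.deq, false), (.w, false)] ++
  List.replicate c (.prime, true) ++
  [(.imp, false), (.w, false), (.mem, false), (.w, false)] ++ List.replicate b (.prime, false) ++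
  [(.rb, false), (.rb, false)]

theorem mtf_fst (a c b : ℕ) : (mtf a c b).map Prod.fst = (tf a c b).str := by
  simp [mtf, tf, Fm.str, varStr]

theorem np_replicate (n : ℕ) (b : Bool) : np (List.replicate n (Alph.prime, b)) = 0 := by
  induction n with
  | zero => rfl
  | succ n ih => simp [List.replicate_succ, np, ih]

theorem mks_replicate (n : ℕ) (b : Bool) :
    mks (List.replicate n (Alph.prime, b)) = n * b.toNat := by
  induction n with
  | zero => simp [mks]
  | succ n ih => simp [List.replicate_succ, mks, ih]; ring

theorem occ_replicate (wt : Bool → ℕ) (n : ℕ) (b : Bool) (j : ℕ) :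
    occ wt (List.replicate n (Alph.prime, b)) j = if j = 0 then n * wt b else 0 := by
  induction n with
  | zero => simp [occ]
  | succ n ih => simp [List.replicate_succ, occ, ih]; split_ifs <;> ring

theorem np_mtf (a c b : ℕ) : np (mtf a c b) = 15 := by
  simp [mtf, np_append, np_replicate, np]

theorem mks_mtf (a c b : ℕ) : mks (mtf a c b) = c := by
  simp [mtf, mks_append, mks_replicate, mks]

theorem skel_mtf (a c b : ℕ) : skel (mtf a c b) = skel (mtf 0 0 0) := by
  simp only [mtf, skel_append, skel_of_np (np_replicate _ _)]

theorem occ_fixed (wt : Bool → ℕ) (s : List (Alph × Bool)) (h : ∀ p ∈ s, p.1 ≠ Alph.prime)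
    (j : ℕ) : occ wt s j = 0 := by
  induction s generalizing j with
  | nil => rfl
  | cons a s ih =>
    obtain ⟨a, b⟩ := a
    have := h (a, b) (by simp)
    simp only at this
    simp [occ, this, ih (fun p hp => h p (by simp [hp]))]

theorem occ_mtf (wt : Bool → ℕ) (a c b j : ℕ) : occ wt (mtf a c b) j =
    if j = 4 then a * wt false else if j = 9 then c * wt true else
      if j = 13 then b * wt false else 0 := by
  unfold mtf
  simp only [occ_append, np_append, np_replicate, occ_replicate]
  rw [occ_fixed, occ_fixed, occ_fixed, occ_fixed]
  · simp only [np]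
    simp
    split_ifs <;> omega
  all_goals simp

theorem tf_stratified {a c : ℕ} (h : a ≠ c) (h0 : a ≠ 0) : (tf a c a).Stratified := by
  refine ⟨fun x => if x = a then 1 else 0, ?_, ?_⟩
  · simp [tf, Fm.memPairs, h0.symm]
  · simp [tf, Fm.eqPairs, h0.symm, h.symm]

theorem tf_not_stratified {a c b : ℕ} (h : a = c ∨ b = c) : ¬ (tf a c b).Stratified := by
  rintro ⟨σ, h1, h2⟩
  simp [tf, Fm.memPairs, Fm.eqPairs] at h1 h2
  rcases h with rfl | rfl <;> omega

/-- The language of stratified formulae of set theory is not context-free. -/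
theorem stratified_not_contextFree :
    ¬ Language.IsContextFree {s : List Alph | ∃ φ : Fm, φ.Stratified ∧ φ.str = s} := by
  rintro ⟨g, hg⟩
  obtain ⟨B, hB⟩ := ogden g (Prod.fst : Alph × Bool → Alph) mks np rfl
    (by rintro ⟨a, b⟩; simpa [mks] using Bool.toNat_le b) mks_append np_append 15
  set n := B + 1 with hn
  have hf : 0 < n.factorial := n.factorial_pos
  set a := n + n.factorial with ha
  obtain ⟨u, v, x, y, z, e, hpos, hv, hy, hp⟩ := hB (mtf a n a)
    (by
      rw [hg, mtf_fst]
      exact ⟨_, tf_stratified (by omega) (by omega), rfl⟩)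
    (by rw [np_mtf]) (by rw [mks_mtf]; omega)
  -- weights inserted by pumping
  let E : (Bool → ℕ) → ℕ → ℕ := fun wt j =>
    (if np u ≤ j then occ wt v (j - np u) else 0) +
      if np u + np x ≤ j then occ wt y (j - (np u + np x)) else 0
  let R : (Bool → ℕ) → ℕ → ℕ := fun wt j => occ wt (u ++ x ++ z) j
  have hocc : ∀ wt j i, occ wt (u ++ rep v i ++ x ++ rep y i ++ z) j = R wt j + i * E wt j := by
    intro wt j i
    simp only [occ_append, np_append, np_rep hv, np_rep hy, R, E]
    have h1 : occ wt (rep v i) (j - np u) = i * occ wt v (j - np u) := occ_rep wt hv _ i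
    have h2 : occ wt (rep y i) (j - (np u + np x)) = i * occ wt y (j - (np u + np x)) :=
      occ_rep wt hy _ i
    simp only [add_zero, h1, h2]
    split_ifs <;> ring
  have hone : u ++ rep v 1 ++ x ++ rep y 1 ++ z = mtf a n a := by simp [rep, e]
  have hsum : ∀ wt j, R wt j + E wt j = occ wt (mtf a n a) j := by
    intro wt j
    have := hocc wt j 1
    rw [hone, one_mul] at this
    exact this.symm
  have hEz : ∀ wt j, j ≠ np u → j ≠ np u + np x → E wt j = 0 := by
    intro wt j h1 h2
    simp only [E]
    have h3 : (if np u ≤ j then occ wt v (j - np u) else 0) = 0 := by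
      split_ifs
      · exact occ_of_np wt hv (by omega)
      · rfl
    have h4 : (if np u + np x ≤ j then occ wt y (j - (np u + np x)) else 0) = 0 := by
      split_ifs
      · exact occ_of_np wt hy (by omega)
      · rfl
    rw [h3, h4]
  have hEle : ∀ j, E Bool.toNat j ≤ E (fun _ => 1) j := by
    intro j
    have h1 := occ_le (v := v) (j - np u)
    have h2 := occ_le (v := y) (j - (np u + np x))
    simp only [E]
    split_ifs <;> omega
  -- the marked run is pumped
  have hmark : ∀ j, 0 < E Bool.toNat j → j = 9 := by
    intro j hj
    have := hsum Bool.toNat j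
    rw [occ_mtf] at this
    by_contra hne
    simp [hne] at this
    omega
  have h9 : 0 < E Bool.toNat 9 ∧ (np u = 9 ∨ np u + np x = 9) := by
    rw [mks_le_occ hv, mks_le_occ hy] at hpos
    rcases Nat.eq_zero_or_pos (occ Bool.toNat v 0) with h0 | h0
    · have h1 : 0 < E Bool.toNat (np u + np x) := by
        simp only [E]; simp; omega
      have h2 := hmark _ h1
      rw [h2] at h1
      exact ⟨h1, .inr h2⟩
    · have h1 : 0 < E Bool.toNat (np u) := by
        simp only [E]; simp; omega
      have h2 := hmark _ h1
      rw [h2] at h1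
      exact ⟨h1, .inl h2⟩
  let E1 := E (fun _ => 1)
  have hE9 : 0 < E1 9 := lt_of_lt_of_le h9.1 (hEle 9)
  have hs1 : ∀ j, R (fun _ => 1) j + E1 j =
      if j = 4 then a else if j = 9 then n else if j = 13 then a else 0 := by
    intro j
    have := hsum (fun _ => 1) j
    rw [occ_mtf] at this
    simpa using this
  have hE9n : E1 9 ≤ n := by
    have := hs1 9
    simp at this; omega
  obtain ⟨q, hq⟩ := Nat.dvd_factorial hE9 hE9n
  have hfin : ∀ j, occ (fun _ => 1) (u ++ rep v (1 + q) ++ x ++ rep y (1 + q) ++ z) j =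
      (if j = 4 then a else if j = 9 then n else if j = 13 then a else 0) + q * E1 j := by
    intro j
    rw [hocc, ← hs1]
    simp only [E1]; ring
  have hword : (u ++ rep v (1 + q) ++ x ++ rep y (1 + q) ++ z).map Prod.fst =
      (tf (a + q * E1 4) a (a + q * E1 13)).str := by
    rw [← mtf_fst]
    apply word_ext
    · rw [skel_mtf, ← skel_mtf a n a, e]
      simp only [skel_append, skel_of_np hv, skel_of_np hy, skel_of_np (np_rep hv _),
        skel_of_np (np_rep hy _)]
    · intro j
      rw [hfin, occ_mtf]
      by_cases j4 : j = 4
      · subst j4; simp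
      by_cases j9 : j = 9
      · subst j9; simp [ha, hq]; ring
      by_cases j13 : j = 13
      · subst j13; simp
      have := hs1 j
      simp [j4, j9, j13] at this ⊢
      right; exact this.2
  have hin := hp (1 + q)
  rw [hg, hword] at hin
  obtain ⟨φ, hφ, hstr⟩ := hin
  rw [str_injective hstr] at hφ
  refine tf_not_stratified ?_ hφ
  have hz : E1 4 = 0 ∨ E1 13 = 0 := by
    by_cases h4 : np u = 4
    · right
      exact hEz _ _ (by omega) (by omega)
    · by_cases h4' : np u + np x = 4
      · omega
      · left; exact hEz _ _ (by omega) (by omega)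
  rcases hz with h | h
  · left; simp [h]
  · right; simp [h]
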